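/- Fix constants 0 < δ ≤ Δ, an integer k ≥ 2, and α ∈ (−1/2, 1). There exist constants c₀, c₁ > 0 and T₀ ∈ ℕ such that: for every Alice value density v_A, every deterministic Alice strategy S_A for the repeated k-cut game, and every horizon T ≥ T₀, there exist a Bob value density v_B (measurable, bounded above and below by positive constants depending only on δ and Δ, with total integral 1) and a deterministic Bob strategy whose regret over horizon T is at most c₀·T^α, such that Alice's Stackelberg regret under S_A over horizon T is at least c₁·T^{(2+α)/3}/k. -/

import Mathlib

open MeasureTheory Set

noncomputable section

attribute [local instance] Classical.propDecidable

/-- A value density: measurable, bounded in `[δ, Δ]` on `[0,1]`, integrating to 1 on `[0,1]`. -/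
def IsValueDensity (δ Δ : ℝ) (v : ℝ → ℝ) : Prop :=
  Measurable v ∧ (∀ x ∈ Set.Icc (0:ℝ) 1, v x ∈ Set.Icc δ Δ) ∧
    (∫ x in Set.Icc (0:ℝ) 1, v x) = 1

/-- The value of a piece `S` under density `v`. -/
def pieceVal (v : ℝ → ℝ) (S : Set ℝ) : ℝ := ∫ x in S, v x

/-- Extended cut points: `0, c 0, …, c (k-1), 1`. -/
def extCuts (k : ℕ) (c : Fin k → ℝ) : ℕ → ℝ := fun i =>
  if i = 0 then 0 else if h : i - 1 < k then c ⟨i - 1, h⟩ else 1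

/-- A valid vector of `k` cut points: nondecreasing, within `[0,1]`. -/
def ValidCuts (k : ℕ) (c : Fin k → ℝ) : Prop :=
  Monotone c ∧ ∀ i, c i ∈ Set.Icc (0:ℝ) 1

/-- The two pieces of the alternating partition induced by cuts `c`:
`true` gives the union of even-indexed intervals, `false` the odd-indexed ones. -/
def altPiece (k : ℕ) (c : Fin k → ℝ) (b : Bool) : Set ℝ :=
  ⋃ i ∈ Finset.range (k + 1),
    if decide (i % 2 = 0) = b then Set.Icc (extCuts k c i) (extCuts k c (i + 1)) else ∅

/-- Alice's Stackelberg value with `k` cuts: max of `V_A(Z_A)` over alternating partitions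
`(Z_A, Z_B)` induced by `k` cut points with `V_B(Z_B) ≥ 1/2`. -/
def stackelbergValue (k : ℕ) (vA vB : ℝ → ℝ) : ℝ :=
  sSup { u : ℝ | ∃ (c : Fin k → ℝ) (b : Bool), ValidCuts k c ∧
    1 / 2 ≤ pieceVal vB (altPiece k c (!b)) ∧ u = pieceVal vA (altPiece k c b) }

/-- A history of play: the list of (Alice's cuts, Bob's choice) in past rounds. -/
abbrev Hist (k : ℕ) := List ((Fin k → ℝ) × Bool)

/-- Alice's deterministic strategy: horizon and history ↦ next cut vector. -/
abbrev AliceStrategy (k : ℕ) := ℕ → Hist k → (Fin k → ℝ)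

/-- Bob's deterministic strategy: horizon, history, and Alice's current cuts ↦ choice. -/
abbrev BobStrategy (k : ℕ) := ℕ → Hist k → (Fin k → ℝ) → Bool

/-- The history of play after `t` rounds. -/
def playHist (k : ℕ) (SA : AliceStrategy k) (SB : BobStrategy k) (T : ℕ) : ℕ → Hist k
  | 0 => []
  | t + 1 =>
      let h := playHist k SA SB T t
      let cuts := SA T h
      h ++ [(cuts, SB T h cuts)]

/-- Alice's cuts in round `t` (0-indexed). -/
def roundCuts (k : ℕ) (SA : AliceStrategy k) (SB : BobStrategy k) (T t : ℕ) : Fin k → ℝ :=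
  SA T (playHist k SA SB T t)

/-- Bob's choice in round `t` (0-indexed). -/
def roundChoice (k : ℕ) (SA : AliceStrategy k) (SB : BobStrategy k) (T t : ℕ) : Bool :=
  SB T (playHist k SA SB T t) (roundCuts k SA SB T t)

/-- Alice's Stackelberg regret over horizon `T`: in each round she receives the value of
the piece Bob did not choose. -/
def aliceRegret (k : ℕ) (vA vB : ℝ → ℝ) (SA : AliceStrategy k) (SB : BobStrategy k)
    (T : ℕ) : ℝ :=
  ∑ t ∈ Finset.range T,
    (stackelbergValue k vA vB -
      pieceVal vA (altPiece k (roundCuts k SA SB T t) (!(roundChoice k SA SB T t))))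

/-- Bob's regret over horizon `T` relative to always choosing his preferred piece. -/
def bobRegret (k : ℕ) (vB : ℝ → ℝ) (SA : AliceStrategy k) (SB : BobStrategy k) (T : ℕ) : ℝ :=
  ∑ t ∈ Finset.range T,
    (max (pieceVal vB (altPiece k (roundCuts k SA SB T t) true))
        (pieceVal vB (altPiece k (roundCuts k SA SB T t) false)) -
      pieceVal vB (altPiece k (roundCuts k SA SB T t) (roundChoice k SA SB T t)))

/-- Bob's strategy guarantees regret at most `R T` against every Alice strategy and horizon. -/
def BobGuarantees (k : ℕ) (vB : ℝ → ℝ) (SB : BobStrategy k) (R : ℕ → ℝ) : Prop :=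
  ∀ (SA : AliceStrategy k) (T : ℕ), bobRegret k vB SA SB T ≤ R T

/-- The myopic Bob: chooses the piece of larger `V_B`-value, breaking ties towards
the piece of smaller `V_A`-value. -/
def myopicBob (k : ℕ) (vA vB : ℝ → ℝ) : BobStrategy k := fun _ _ c =>
  if pieceVal vB (altPiece k c false) < pieceVal vB (altPiece k c true) then true
  else if pieceVal vB (altPiece k c true) < pieceVal vB (altPiece k c false) then false
  else if pieceVal vA (altPiece k c true) ≤ pieceVal vA (altPiece k c false) then true
  else false

/-- Alice's strategy always produces valid cut vectors. -/
def AliceValid (k : ℕ) (SA : AliceStrategy k) : Prop := ∀ T h, ValidCuts k (SA T h)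

/-! ### Basic facts on alternating pieces -/

lemma mem_altPiece {k : ℕ} {c : Fin k → ℝ} {b : Bool} {x : ℝ} :
    x ∈ altPiece k c b ↔ ∃ i, i ≤ k ∧ decide (i % 2 = 0) = b ∧
      extCuts k c i ≤ x ∧ x ≤ extCuts k c (i + 1) := by
  unfold altPiece
  simp only [Set.mem_iUnion, Finset.mem_range, Nat.lt_succ_iff]
  constructor
  · rintro ⟨i, hi, hx⟩
    split_ifs at hx with h
    · exact ⟨i, hi, h, hx.1, hx.2⟩
    · exact absurd hx (Set.notMem_empty x)
  · rintro ⟨i, hi, h, h1, h2⟩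
    refine ⟨i, hi, ?_⟩
    rw [if_pos h]
    exact ⟨h1, h2⟩

lemma extCuts_zero {k : ℕ} (c : Fin k → ℝ) : extCuts k c 0 = 0 := by simp [extCuts]

lemma extCuts_last {k : ℕ} (c : Fin k → ℝ) : extCuts k c (k + 1) = 1 := by simp [extCuts]

lemma extCuts_succ {k : ℕ} (c : Fin k → ℝ) {i : ℕ} (hi : i < k) :
    extCuts k c (i + 1) = c ⟨i, hi⟩ := by simp [extCuts, hi]

lemma extCuts_mem {k : ℕ} {c : Fin k → ℝ} (hc : ValidCuts k c) (i : ℕ) :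
    extCuts k c i ∈ Set.Icc (0 : ℝ) 1 := by
  unfold extCuts
  split_ifs with h1 h2
  · simp
  · exact hc.2 _
  · simp

lemma extCuts_mono {k : ℕ} {c : Fin k → ℝ} (hc : ValidCuts k c) : Monotone (extCuts k c) := by
  apply monotone_nat_of_le_succ
  intro i
  rcases Nat.eq_zero_or_pos i with h | h
  · subst h
    rw [extCuts_zero]
    exact (extCuts_mem hc _).1
  · obtain ⟨j, rfl⟩ : ∃ j, i = j + 1 := ⟨i - 1, by omega⟩
    by_cases h2 : j + 1 < k
    · rw [extCuts_succ c h2, extCuts_succ c (by omega : j < k)]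
      apply hc.1
      simp
    · have : extCuts k c (j + 1 + 1) = 1 := by
        simp [extCuts, h2]
      rw [this]
      exact (extCuts_mem hc _).2

lemma altPiece_measurable {k : ℕ} (c : Fin k → ℝ) (b : Bool) :
    MeasurableSet (altPiece k c b) := by
  unfold altPiece
  apply Finset.measurableSet_biUnion
  intro i _
  split_ifs
  · exact measurableSet_Icc
  · exact MeasurableSet.empty

lemma altPiece_subset {k : ℕ} {c : Fin k → ℝ} (hc : ValidCuts k c) (b : Bool) :
    altPiece k c b ⊆ Set.Icc 0 1 := by
  intro x hx
  obtain ⟨i, _, _, h1, h2⟩ := mem_altPiece.1 hx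
  exact ⟨(extCuts_mem hc i).1.trans h1, h2.trans (extCuts_mem hc _).2⟩

lemma exists_piece {k : ℕ} (c : Fin k → ℝ) {x : ℝ} (hx : x ∈ Set.Icc (0 : ℝ) 1) :
    ∃ i, i ≤ k ∧ extCuts k c i ≤ x ∧ x ≤ extCuts k c (i + 1) := by
  have hex : ∃ n, x ≤ extCuts k c (n + 1) := ⟨k, by rw [extCuts_last]; exact hx.2⟩
  refine ⟨Nat.find hex, Nat.find_min' hex (by rw [extCuts_last]; exact hx.2), ?_,
    Nat.find_spec hex⟩
  rcases Nat.eq_zero_or_pos (Nat.find hex) with h | h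
  · rw [h, extCuts_zero]
    exact hx.1
  · have := Nat.find_min hex (m := Nat.find hex - 1) (by omega)
    rw [Nat.sub_add_cancel h] at this
    exact (not_le.1 this).le

lemma mem_altPiece_or {k : ℕ} (c : Fin k → ℝ) (b : Bool) {x : ℝ} (hx : x ∈ Set.Icc (0 : ℝ) 1) :
    x ∈ altPiece k c b ∨ x ∈ altPiece k c (!b) := by
  obtain ⟨i, hi, h1, h2⟩ := exists_piece c hx
  by_cases h : decide (i % 2 = 0) = b
  · exact Or.inl (mem_altPiece.2 ⟨i, hi, h, h1, h2⟩)
  · refine Or.inr (mem_altPiece.2 ⟨i, hi, ?_, h1, h2⟩)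
    cases b <;> simp_all

lemma altPiece_inter_null {k : ℕ} {c : Fin k → ℝ} (hc : ValidCuts k c) (b : Bool) :
    volume (altPiece k c b ∩ altPiece k c (!b)) = 0 := by
  have hfin : ((Finset.range (k + 2)).image (extCuts k c) : Set ℝ).Finite :=
    Finset.finite_toSet _
  refine measure_mono_null ?_ (hfin.measure_zero volume)
  rintro x ⟨h1, h2⟩
  obtain ⟨i, hi, hib, hi1, hi2⟩ := mem_altPiece.1 h1
  obtain ⟨j, hj, hjb, hj1, hj2⟩ := mem_altPiece.1 h2
  have hne : i ≠ j := by
    rintro rfl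
    rw [hib] at hjb
    cases b <;> simp at hjb
  rw [Finset.mem_coe, Finset.mem_image]
  rcases lt_or_gt_of_ne hne with h | h
  · exact ⟨i + 1, by simp; omega, le_antisymm ((extCuts_mono hc h).trans hj1) hi2⟩
  · exact ⟨j + 1, by simp; omega, le_antisymm ((extCuts_mono hc h).trans hi1) hj2⟩

lemma fin_of_subset {X : Set ℝ} (h : X ⊆ Set.Icc 0 1) : volume X ≠ ⊤ :=
  ne_top_of_le_ne_top (by simp) (measure_mono h)

lemma vol_split {k : ℕ} {c : Fin k → ℝ} (hc : ValidCuts k c) (b : Bool) {X : Set ℝ}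
    (hX : X ⊆ Set.Icc 0 1) :
    volume.real (altPiece k c b ∩ X) + volume.real (altPiece k c (!b) ∩ X) = volume.real X := by
  have hXf := fin_of_subset hX
  have h1 := measureReal_inter_add_sdiff (μ := volume) (s := X) (altPiece_measurable c b) hXf
  rw [Set.inter_comm, ← h1, Set.inter_comm X]
  congr 1
  apply measureReal_congr
  have hnull := altPiece_inter_null hc b
  have : ∀ᵐ x ∂(volume : Measure ℝ), x ∉ altPiece k c b ∩ altPiece k c (!b) :=
    measure_eq_zero_iff_ae_notMem.1 hnull
  filter_upwards [this] with x hx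
  apply propext
  constructor
  · rintro ⟨h1, h2⟩
    exact ⟨h2, fun h => hx ⟨h, h1⟩⟩
  · rintro ⟨h1, h2⟩
    exact ⟨(mem_altPiece_or c b (hX h1)).resolve_left h2, h1⟩

lemma vol_sum {k : ℕ} {c : Fin k → ℝ} (hc : ValidCuts k c) (b : Bool) :
    volume.real (altPiece k c b) = ∑ i ∈ Finset.range (k + 1),
      if decide (i % 2 = 0) = b then extCuts k c (i + 1) - extCuts k c i else 0 := by
  have hm := extCuts_mono hc
  unfold altPiece
  rw [measureReal_def, measure_biUnion_finset₀, ENNReal.toReal_sum]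
  · apply Finset.sum_congr rfl
    intro i _
    split_ifs
    · rw [Real.volume_Icc, ENNReal.toReal_ofReal (sub_nonneg.2 (hm (Nat.le_succ i)))]
    · simp
  · intro i _
    split_ifs <;> simp
  · intro i _ j _ hij
    simp only [Function.onFun]
    split_ifs
    · rw [AEDisjoint]
      rcases lt_or_gt_of_ne hij with h | h
      · refine measure_mono_null (t := {extCuts k c (i + 1)}) ?_ (by simp)
        rintro x ⟨h1, h2⟩
        exact le_antisymm h1.2 ((hm h).trans h2.1)
      · refine measure_mono_null (t := {extCuts k c (j + 1)}) ?_ (by simp)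
        rintro x ⟨h1, h2⟩
        exact le_antisymm h2.2 ((hm h).trans h1.1)
    all_goals simp [AEDisjoint]
  · intro i _
    split_ifs
    · exact measurableSet_Icc.nullMeasurableSet
    · exact MeasurableSet.empty.nullMeasurableSet

/-! ### Densities in normalised coordinates -/

/-- The density of Bob in coordinates where Alice is uniform. -/
def gfun (l h η : ℝ) (H Wp Wm : Set ℝ) : ℝ → ℝ := fun y =>
  l + (h - l) * H.indicator (fun _ => (1 : ℝ)) y +
    η * (Wp.indicator (fun _ => (1 : ℝ)) y - Wm.indicator (fun _ => (1 : ℝ)) y)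

lemma gfun_measurable (l h η : ℝ) {H Wp Wm : Set ℝ} (hH : MeasurableSet H)
    (hp : MeasurableSet Wp) (hm : MeasurableSet Wm) : Measurable (gfun l h η H Wp Wm) := by
  unfold gfun
  have h1 : Measurable (H.indicator (fun _ : ℝ => (1 : ℝ))) := measurable_const.indicator hH
  have h2 : Measurable (Wp.indicator (fun _ : ℝ => (1 : ℝ))) := measurable_const.indicator hp
  have h3 : Measurable (Wm.indicator (fun _ : ℝ => (1 : ℝ))) := measurable_const.indicator hm
  exact (measurable_const.add (h1.const_mul _)).add ((h2.sub h3).const_mul _)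

lemma pieceVal_gfun (l h η : ℝ) {H Wp Wm S : Set ℝ} (hH : MeasurableSet H)
    (hp : MeasurableSet Wp) (hm : MeasurableSet Wm) (hS : volume S ≠ ⊤) :
    pieceVal (gfun l h η H Wp Wm) S = l * volume.real S + (h - l) * volume.real (S ∩ H) +
      η * (volume.real (S ∩ Wp) - volume.real (S ∩ Wm)) := by
  have key : ∀ X : Set ℝ, MeasurableSet X →
      Integrable (X.indicator (fun _ => (1 : ℝ))) (volume.restrict S) ∧
      ∫ x in S, X.indicator (fun _ => (1 : ℝ)) x = volume.real (S ∩ X) := by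
    intro X hX
    constructor
    · apply IntegrableOn.integrable_indicator _ hX
      apply integrableOn_const
      · rw [Measure.restrict_apply hX]
        exact ne_top_of_le_ne_top hS (measure_mono Set.inter_subset_right)
      · simp
    · rw [integral_indicator hX, Measure.restrict_restrict hX]
      simp [Set.inter_comm]
  obtain ⟨i1, e1⟩ := key H hH
  obtain ⟨i2, e2⟩ := key Wp hp
  obtain ⟨i3, e3⟩ := key Wm hm
  have i0 : Integrable (fun _ : ℝ => l) (volume.restrict S) := by
    exact integrableOn_const hS
  unfold pieceVal gfun
  have j1 : Integrable (fun x => l + (h - l) * H.indicator (fun _ => (1 : ℝ)) x)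
      (volume.restrict S) := i0.add (i1.const_mul _)
  have j2 : Integrable (fun x => η * (Wp.indicator (fun _ => (1 : ℝ)) x -
      Wm.indicator (fun _ => (1 : ℝ)) x)) (volume.restrict S) := (i2.sub i3).const_mul _
  rw [integral_add j1 j2,
    integral_add i0 (i1.const_mul _), integral_const_mul, integral_const_mul,
    integral_sub i2 i3, e1, e2, e3]
  simp [mul_comm]

/-! ### Change of coordinates -/

lemma cov (δ Δ : ℝ) (hδ : 0 < δ) (vA : ℝ → ℝ) (hA : IsValueDensity δ Δ vA) (k : ℕ) :
    ∃ F : ℝ → ℝ, Measurable F ∧ (∀ x ∈ Set.Icc (0 : ℝ) 1, F x ∈ Set.Icc (0 : ℝ) 1) ∧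
      (∀ c, ValidCuts k c → ValidCuts k (fun i => F (c i))) ∧
      (∀ y, ValidCuts k y → ∃ c, ValidCuts k c ∧ (fun i => F (c i)) = y) ∧
      (∀ g : ℝ → ℝ, Measurable g →
        pieceVal (fun x => vA x * g (F x)) (Set.Icc 0 1) = pieceVal g (Set.Icc 0 1)) ∧
      (∀ g : ℝ → ℝ, Measurable g → ∀ c, ValidCuts k c → ∀ b,
        pieceVal (fun x => vA x * g (F x)) (altPiece k c b) =
          pieceVal g (altPiece k (fun i => F (c i)) b)) ∧
      (∀ c, ValidCuts k c → ∀ b,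
        pieceVal vA (altPiece k c b) = volume.real (altPiece k (fun i => F (c i)) b)) := by
  obtain ⟨hmeas, hbd, hint⟩ := hA
  set ν : Measure ℝ := volume.restrict (Set.Icc (0 : ℝ) 1) with hν
  have hae : ∀ᵐ x ∂ν, x ∈ Set.Icc (0 : ℝ) 1 := ae_restrict_mem measurableSet_Icc
  have hbd' : ∀ᵐ x ∂ν, 0 ≤ vA x := by
    filter_upwards [hae] with x hx
    exact hδ.le.trans (hbd x hx).1
  have hvint : Integrable vA ν := by
    by_contra hcon
    rw [integral_undef hcon] at hint
    norm_num at hint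
  set μ : Measure ℝ := ν.withDensity (fun x => ENNReal.ofReal (vA x)) with hμ
  have hμν : μ ≪ ν := withDensity_absolutelyContinuous _ _
  have hνvol : ν ≪ (volume : Measure ℝ) := Measure.absolutelyContinuous_of_le Measure.restrict_le_self
  have hμset : ∀ s, MeasurableSet s → μ.real s = ∫ x in s, vA x ∂ν := by
    intro s hs
    rw [measureReal_def, hμ, withDensity_apply _ hs,
      ← ofReal_integral_eq_lintegral_ofReal hvint.restrict (ae_restrict_of_ae hbd'),
      ENNReal.toReal_ofReal (integral_nonneg_of_ae (ae_restrict_of_ae hbd'))]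
  have hprob : IsProbabilityMeasure μ := by
    constructor
    rw [hμ, withDensity_apply _ MeasurableSet.univ, Measure.restrict_univ,
      ← ofReal_integral_eq_lintegral_ofReal hvint hbd', hint]
    simp
  set F : ℝ → ℝ := fun x => μ.real (Set.Iic x) with hF
  have Fmono : Monotone F := fun x y hxy => measureReal_mono (Set.Iic_subset_Iic.2 hxy)
  have μsing : ∀ x : ℝ, μ {x} = 0 := fun x => hμν (hνvol (by simp))
  have hdiff : ∀ x y : ℝ, x ≤ y → F y - F x = μ.real (Set.Ioc x y) := by
    intro x y hxy
    have : Set.Iic y = Set.Iic x ∪ Set.Ioc x y := (Set.Iic_union_Ioc_eq_Iic hxy).symm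
    simp only [hF]
    rw [this, measureReal_union _ measurableSet_Ioc]
    · ring
    · rw [Set.disjoint_left]
      intro z hz hz'
      exact absurd hz'.1 (not_lt.2 hz)
  have hμIoc : ∀ x y : ℝ, 0 ≤ x → x ≤ y → y ≤ 1 →
      δ * (y - x) ≤ F y - F x ∧ F y - F x ≤ Δ * (y - x) := by
    intro x y hx hxy hy
    rw [hdiff x y hxy, hμset _ measurableSet_Ioc]
    have hsub : Set.Ioc x y ⊆ Set.Icc 0 1 := fun z hz => ⟨hx.trans hz.1.le, hz.2.trans hy⟩
    have hr : ν.restrict (Set.Ioc x y) = volume.restrict (Set.Ioc x y) := by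
      rw [hν, Measure.restrict_restrict measurableSet_Ioc, Set.inter_eq_left.2 hsub]
    have hvi : IntegrableOn vA (Set.Ioc x y) volume := by
      have := hvint.restrict (s := Set.Ioc x y)
      rwa [hr] at this
    rw [hr]
    have hvol : volume.real (Set.Ioc x y) = y - x := by
      rw [measureReal_def, Real.volume_Ioc, ENNReal.toReal_ofReal (by linarith)]
    have hc : ∀ r : ℝ, ∫ z in Set.Ioc x y, r = r * (y - x) := by
      intro r
      rw [setIntegral_const, hvol, smul_eq_mul, mul_comm]
    rw [← hc δ, ← hc Δ]
    constructor
    · apply setIntegral_mono_on _ hvi measurableSet_Ioc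
      · intro z hz
        exact (hbd z (hsub hz)).1
      · exact integrableOn_const (by simp) (by simp)
    · apply setIntegral_mono_on hvi _ measurableSet_Ioc
      · intro z hz
        exact (hbd z (hsub hz)).2
      · exact integrableOn_const (by simp) (by simp)
  have F0 : F 0 = 0 := by
    have : μ (Set.Iic 0) = 0 := by
      apply hμν
      rw [hν, Measure.restrict_apply measurableSet_Iic]
      refine measure_mono_null (t := {0}) ?_ (by simp)
      rintro x ⟨h1, h2⟩
      exact le_antisymm h1 h2.1
    simp [hF, measureReal_def, this]
  have F1 : F 1 = 1 := by
    have : μ (Set.Ioi 1) = 0 := by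
      apply hμν
      rw [hν, Measure.restrict_apply measurableSet_Ioi]
      refine measure_mono_null (t := ∅) ?_ (by simp)
      rintro x ⟨h1, h2⟩
      exact absurd h2.2 (not_le.2 h1)
    have h2 : μ (Set.Iic 1) = 1 := by
      rw [← prob_compl_eq_zero_iff measurableSet_Iic, Set.compl_Iic, this]
    simp [hF, measureReal_def, h2]
  have Fstrict : ∀ x y : ℝ, 0 ≤ x → x < y → y ≤ 1 → F x < F y := by
    intro x y hx hxy hy
    have := (hμIoc x y hx hxy.le hy).1
    nlinarith
  have Fcont : ContinuousOn F (Set.Icc 0 1) := by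
    have hΔ : 0 ≤ Δ := by
      have := hbd 0 (by simp)
      exact hδ.le.trans (this.1.trans this.2)
    have : LipschitzOnWith (Real.toNNReal Δ) F (Set.Icc 0 1) := by
      apply LipschitzOnWith.of_le_add_mul
      intro x hx y hy
      rw [Real.coe_toNNReal _ hΔ, Real.dist_eq]
      rcases le_total x y with h | h
      · have := Fmono h
        have : 0 ≤ Δ * |x - y| := by positivity
        linarith
      · have := (hμIoc y x hy.1 h hx.2).2
        rw [abs_of_nonneg (by linarith)]
        linarith
    exact this.continuousOn
  have Fsurj : ∀ y ∈ Set.Icc (0 : ℝ) 1, ∃ x ∈ Set.Icc (0 : ℝ) 1, F x = y := by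
    intro y hy
    have := intermediate_value_Icc (zero_le_one (α := ℝ)) Fcont
    rw [F0, F1] at this
    exact this hy
  have Fle : ∀ x ∈ Set.Icc (0 : ℝ) 1, ∀ y ∈ Set.Icc (0 : ℝ) 1, F x ≤ F y ↔ x ≤ y := by
    intro x hx y hy
    constructor
    · intro h
      by_contra hcon
      exact absurd h (not_le.2 (Fstrict y x hy.1 (not_le.1 hcon) hx.2))
    · exact fun h => Fmono h
  have Fmem : ∀ x ∈ Set.Icc (0 : ℝ) 1, F x ∈ Set.Icc (0 : ℝ) 1 := by
    intro x hx
    exact ⟨F0 ▸ Fmono hx.1, F1 ▸ Fmono hx.2⟩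
  have hmap : Measure.map F μ = ν := by
    have : IsProbabilityMeasure (Measure.map F μ) :=
      Measure.isProbabilityMeasure_map Fmono.measurable.aemeasurable
    apply Measure.ext_of_Iic
    intro y
    rw [Measure.map_apply Fmono.measurable measurableSet_Iic, hν,
      Measure.restrict_apply measurableSet_Iic]
    have hF01 : ∀ x, F x ∈ Set.Icc (0 : ℝ) 1 := fun x => ⟨measureReal_nonneg, measureReal_le_one⟩
    rcases lt_or_ge y 0 with h | h
    · have e1 : F ⁻¹' Set.Iic y = ∅ := by
        ext x
        simp only [Set.mem_preimage, Set.mem_Iic, Set.mem_empty_iff_false, iff_false, not_le]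
        exact h.trans_le (hF01 x).1
      have e2 : Set.Iic y ∩ Set.Icc (0 : ℝ) 1 = ∅ := by
        ext x
        simp only [Set.mem_inter_iff, Set.mem_Iic, Set.mem_Icc, Set.mem_empty_iff_false, iff_false]
        rintro ⟨h1, h2, h3⟩
        linarith
      rw [e1, e2]; simp
    rcases le_or_gt y 1 with h' | h'
    · obtain ⟨x, hx, rfl⟩ := Fsurj y ⟨h, h'⟩
      have e1 : μ (F ⁻¹' Set.Iic (F x)) = μ (Set.Iic x) := by
        apply measure_congr
        filter_upwards [hμν.ae_le hae] with z hz
        apply propext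
        exact Fle z hz x hx
      have e2 : Set.Iic (F x) ∩ Set.Icc (0 : ℝ) 1 = Set.Icc 0 (F x) := by
        ext z
        simp only [Set.mem_inter_iff, Set.mem_Iic, Set.mem_Icc]
        constructor
        · rintro ⟨h1, h2, h3⟩; exact ⟨h2, h1⟩
        · rintro ⟨h1, h2⟩; exact ⟨h2, h1, h2.trans h'⟩
      rw [e1, e2, Real.volume_Icc, sub_zero, hF]
      simp
    · have e1 : F ⁻¹' Set.Iic y = Set.univ := by
        ext x
        simp only [Set.mem_preimage, Set.mem_Iic, Set.mem_univ, iff_true]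
        exact (hF01 x).2.trans h'.le
      have e2 : Set.Iic y ∩ Set.Icc (0 : ℝ) 1 = Set.Icc 0 1 := by
        ext x
        simp only [Set.mem_inter_iff, Set.mem_Iic, Set.mem_Icc]
        constructor
        · rintro ⟨h1, h2⟩; exact h2
        · rintro h2; exact ⟨by linarith [h2.2], h2⟩
      rw [e1, e2]; simp
  have general : ∀ g : ℝ → ℝ, Measurable g → ∀ S S' : Set ℝ, MeasurableSet S → MeasurableSet S' →
      S ⊆ Set.Icc 0 1 → S' ⊆ Set.Icc 0 1 → (∀ x ∈ Set.Icc (0 : ℝ) 1, x ∈ S ↔ F x ∈ S') →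
      pieceVal (fun x => vA x * g (F x)) S = pieceVal g S' := by
    intro g hg S S' hS hS' hSs hSs' hiff
    unfold pieceVal
    have e1 : (volume : Measure ℝ).restrict S = ν.restrict S := by
      rw [hν, Measure.restrict_restrict hS, Set.inter_eq_left.2 hSs]
    have e2 : (volume : Measure ℝ).restrict S' = (Measure.map F μ).restrict S' := by
      rw [hmap, hν, Measure.restrict_restrict hS', Set.inter_eq_left.2 hSs']
    have e3 : ∫ x in S', g x ∂(Measure.map F μ) = ∫ x in F ⁻¹' S', g (F x) ∂μ := by
      rw [setIntegral_map hS' hg.aestronglyMeasurable Fmono.measurable.aemeasurable]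
    have e4 : μ.restrict (F ⁻¹' S') = μ.restrict S := by
      apply Measure.restrict_congr_set
      filter_upwards [hμν.ae_le hae] with z hz
      apply propext
      exact (hiff z hz).symm
    rw [e1, e2, e3, e4, hμ]
    have : (fun x => ENNReal.ofReal (vA x)) = fun x => ((Real.toNNReal (vA x) : NNReal) : ENNReal) := rfl
    rw [this, setIntegral_withDensity_eq_setIntegral_smul
      (f := fun x => Real.toNNReal (vA x)) hmeas.real_toNNReal _ hS]
    apply integral_congr_ae
    filter_upwards [ae_restrict_of_ae hbd'] with x hx
    simp [NNReal.smul_def, Real.coe_toNNReal _ hx]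
  have extF : ∀ c : Fin k → ℝ, ∀ i, extCuts k (fun i => F (c i)) i = F (extCuts k c i) := by
    intro c i
    unfold extCuts
    split_ifs <;> simp [F0, F1]
  have validF : ∀ c, ValidCuts k c → ValidCuts k (fun i => F (c i)) := by
    intro c hc
    exact ⟨fun i j hij => Fmono (hc.1 hij), fun i => Fmem _ (hc.2 i)⟩
  have pieceF : ∀ g : ℝ → ℝ, Measurable g → ∀ c, ValidCuts k c → ∀ b,
        pieceVal (fun x => vA x * g (F x)) (altPiece k c b) =
          pieceVal g (altPiece k (fun i => F (c i)) b) := by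
    intro g hg c hc b
    apply general g hg _ _ (altPiece_measurable _ _) (altPiece_measurable _ _)
      (altPiece_subset hc b) (altPiece_subset (validF c hc) b)
    intro x hx
    rw [mem_altPiece, mem_altPiece]
    simp only [extF]
    constructor
    · rintro ⟨i, h1, h2, h3, h4⟩
      exact ⟨i, h1, h2, Fmono h3, Fmono h4⟩
    · rintro ⟨i, h1, h2, h3, h4⟩
      exact ⟨i, h1, h2, (Fle _ (extCuts_mem hc _) _ hx).1 h3, (Fle _ hx _ (extCuts_mem hc _)).1 h4⟩
  refine ⟨F, Fmono.measurable, Fmem, validF, ?_, ?_, pieceF, ?_⟩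
  · intro y hy
    choose! G hG1 hG2 using Fsurj
    refine ⟨fun i => G (y i), ⟨?_, fun i => hG1 _ (hy.2 i)⟩, funext fun i => hG2 _ (hy.2 i)⟩
    intro i j hij
    rw [← Fle _ (hG1 _ (hy.2 i)) _ (hG1 _ (hy.2 j)), hG2 _ (hy.2 i), hG2 _ (hy.2 j)]
    exact hy.1 hij
  · intro g hg
    apply general g hg _ _ measurableSet_Icc measurableSet_Icc le_rfl le_rfl
    intro x hx
    exact ⟨fun _ => Fmem x hx, fun _ => hx⟩
  · intro c hc b
    have := pieceF (fun _ => 1) measurable_const c hc b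
    simp only [mul_one] at this
    rw [this]
    simp [pieceVal]

/-! ### The zones -/

/-- Boundaries of the `k + 1` equal zones. -/
def zb (k : ℕ) : Fin k → ℝ := fun i => ((i : ℕ) + 1 : ℝ) * (1 / (k + 1))

/-- The union of the odd, high zones. -/
def Hs (k : ℕ) : Set ℝ := altPiece k (zb k) false

lemma unit_mul (k : ℕ) : ((k : ℝ) + 1) * (1 / (k + 1)) = 1 := by
  have : (k : ℝ) + 1 ≠ 0 := by positivity
  field_simp

lemma ext_zb (k : ℕ) {i : ℕ} (hi : i ≤ k + 1) :
    extCuts k (zb k) i = (i : ℝ) * (1 / (k + 1)) := by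
  rcases Nat.eq_zero_or_pos i with h | h
  · subst h
    simp [extCuts_zero]
  · obtain ⟨j, rfl⟩ : ∃ j, i = j + 1 := ⟨i - 1, by omega⟩
    by_cases h2 : j < k
    · rw [extCuts_succ _ h2]
      simp [zb]
    · have : j = k := by omega
      subst this
      rw [extCuts_last]
      push_cast
      exact (unit_mul j).symm

lemma zb_valid (k : ℕ) : ValidCuts k (zb k) := by
  have hu : (0 : ℝ) < 1 / (k + 1) := by positivity
  constructor
  · intro i j hij
    unfold zb
    have : ((i : ℕ) : ℝ) ≤ (j : ℕ) := by exact_mod_cast hij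
    nlinarith
  · intro i
    unfold zb
    constructor
    · positivity
    · have : ((i : ℕ) : ℝ) + 1 ≤ k := by exact_mod_cast i.2
      have := unit_mul k
      nlinarith

lemma card_odd (n : ℕ) :
    ∑ i ∈ Finset.range n, (if decide (i % 2 = 0) = false then (1 : ℝ) else 0) = ((n / 2 : ℕ) : ℝ) := by
  induction n with
  | zero => simp
  | succ n ih =>
    rw [Finset.sum_range_succ, ih]
    rcases Nat.even_or_odd' n with ⟨r, rfl | rfl⟩
    · have : (2 * r + 1) / 2 = r := by omega
      simp [this]
    · have h1 : (2 * r + 1 + 1) / 2 = r + 1 := by omega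
      have h2 : (2 * r + 1) / 2 = r := by omega
      have h3 : (2 * r + 1) % 2 = 1 := by omega
      rw [h1, h2]
      simp

lemma Hs_vol (k : ℕ) : volume.real (Hs k) = (((k + 1) / 2 : ℕ) : ℝ) * (1 / (k + 1)) := by
  unfold Hs
  rw [vol_sum (zb_valid k), ← card_odd, Finset.sum_mul]
  apply Finset.sum_congr rfl
  intro i hi
  have hi' : i < k + 1 := Finset.mem_range.1 hi
  rw [ext_zb k (by omega), ext_zb k (by omega)]
  split_ifs
  · push_cast; ring
  · simp

lemma Hs_meas (k : ℕ) : MeasurableSet (Hs k) := altPiece_measurable _ _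

lemma Hs_sub (k : ℕ) : Hs k ⊆ Set.Icc 0 1 := altPiece_subset (zb_valid k) _

lemma exists_params (k : ℕ) (hk : 2 ≤ k) : ∃ l h : ℝ, 0 < l ∧ l < h ∧
    h * (volume.real (Hs k) - (1 / (k + 1)) / 4) = 1 / 2 ∧
    l * (1 - volume.real (Hs k)) + h * volume.real (Hs k) = 1 := by
  have hu : (0 : ℝ) < 1 / (k + 1) := by positivity
  have h1 : (1 / (k + 1) : ℝ) ≤ volume.real (Hs k) := by
    rw [Hs_vol]
    have : (1 : ℝ) ≤ (((k + 1) / 2 : ℕ) : ℝ) := by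
      exact_mod_cast (by omega : 1 ≤ (k + 1) / 2)
    nlinarith
  have h2 : volume.real (Hs k) ≤ 1 / 2 := by
    rw [Hs_vol]
    have : (((k + 1) / 2 : ℕ) : ℝ) ≤ (k + 1) / 2 := by
      have : (((k + 1) / 2 : ℕ) : ℝ) * 2 ≤ ((k + 1 : ℕ) : ℝ) := by
        exact_mod_cast (by omega : (k + 1) / 2 * 2 ≤ k + 1)
      push_cast at this
      linarith
    have := unit_mul k
    nlinarith
  set m := volume.real (Hs k)
  set u : ℝ := 1 / (k + 1)
  have hp : 0 < m - u / 4 := by linarith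
  have hh : (1 / (2 * (m - u / 4))) * (m - u / 4) = 1 / 2 := by
    generalize m - u / 4 = q at hp
    field_simp
  set h := 1 / (2 * (m - u / 4)) with hdef
  have hpos : 0 < h := by positivity
  have hm1 : 0 < 1 - m := by linarith
  have hl : (1 - h * m) / (1 - m) * (1 - m) = 1 - h * m := by field_simp
  refine ⟨(1 - h * m) / (1 - m), h, ?_, ?_, hh, by rw [hl]; ring⟩
  · apply div_pos _ hm1
    nlinarith
  · rw [div_lt_iff₀ hm1]
    nlinarith

/-! ### Structure of near optimal cuts -/

lemma strict_index {k : ℕ} (p : ℕ → ℕ) (hp : ∀ i ≤ k, p i ≤ k)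
    (hs : ∀ i < k, p i < p (i + 1)) : ∀ i ≤ k, p i = i := by
  have h1 : ∀ i, i ≤ k → i ≤ p i := by
    intro i
    induction i with
    | zero => intro _; exact Nat.zero_le _
    | succ i ih =>
      intro hi
      have := ih (by omega)
      have := hs i (by omega)
      omega
  have h2 : ∀ d, d ≤ k → p (k - d) ≤ k - d := by
    intro d
    induction d with
    | zero => intro _; exact hp k le_rfl
    | succ d ih =>
      intro hd
      have h3 := ih (by omega)
      have h4 := hs (k - (d + 1)) (by omega)
      have : k - (d + 1) + 1 = k - d := by omega
      rw [this] at h4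
      omega
  intro i hi
  have := h2 (k - i) (by omega)
  have h5 : k - (k - i) = i := by omega
  rw [h5] at this
  exact le_antisymm this (h1 i hi)

lemma vol_Ioo {a b : ℝ} (h : a ≤ b) : volume.real (Set.Ioo a b) = b - a := by
  rw [measureReal_def, Real.volume_Ioo, ENNReal.toReal_ofReal (by linarith)]

lemma base_formula (k : ℕ) (l h : ℝ) {S : Set ℝ} (hS : S ⊆ Set.Icc 0 1) :
    pieceVal (gfun l h 0 (Hs k) ∅ ∅) S =
      l * volume.real S + (h - l) * volume.real (S ∩ Hs k) := by
  rw [pieceVal_gfun l h 0 (Hs_meas k) MeasurableSet.empty MeasurableSet.empty (fin_of_subset hS)]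
  simp

lemma vol_total {k : ℕ} {y : Fin k → ℝ} (hy : ValidCuts k y) (b : Bool) :
    volume.real (altPiece k y b) + volume.real (altPiece k y (!b)) = 1 := by
  have := vol_split hy b (le_refl (Set.Icc (0 : ℝ) 1))
  rw [Set.inter_eq_left.2 (altPiece_subset hy b), Set.inter_eq_left.2 (altPiece_subset hy _)] at this
  rw [this]
  simp

lemma base_upper {k : ℕ} {l h : ℝ} (hl : 0 < l) (hlh : l < h)
    (e1 : h * (volume.real (Hs k) - (1 / (k + 1)) / 4) = 1 / 2)
    {y : Fin k → ℝ} (hy : ValidCuts k y) (b : Bool)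
    (h1 : 1 / 2 ≤ pieceVal (gfun l h 0 (Hs k) ∅ ∅) (altPiece k y (!b))) :
    volume.real (altPiece k y b) ≤ 1 - volume.real (Hs k) + (1 / (k + 1)) / 4 := by
  rw [base_formula k l h (altPiece_subset hy _)] at h1
  have h2 := vol_total hy b
  have h3 : volume.real (altPiece k y (!b) ∩ Hs k) ≤ volume.real (altPiece k y (!b)) :=
    measureReal_mono Set.inter_subset_left (fin_of_subset (altPiece_subset hy _))
  have hh : 0 < h := by linarith
  by_contra hcon
  push Not at hcon
  have : volume.real (altPiece k y (!b)) < volume.real (Hs k) - (1 / (k + 1)) / 4 := by linarith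
  nlinarith

lemma struct {k : ℕ} (hk : 2 ≤ k) {l h : ℝ} (hl : 0 < l) (hlh : l < h)
    (e1 : h * (volume.real (Hs k) - (1 / (k + 1)) / 4) = 1 / 2)
    {y : Fin k → ℝ} (hy : ValidCuts k y) (b : Bool)
    (h1 : 1 / 2 ≤ pieceVal (gfun l h 0 (Hs k) ∅ ∅) (altPiece k y (!b)))
    (h2 : 1 - volume.real (Hs k) + (1 / (k + 1)) / 4 - (h - l) * (1 / (k + 1)) / (2 * h) ≤
      volume.real (altPiece k y b)) :
    b = true ∧ ∀ i, 2 ≤ i → 5 / 4 * (1 / (k + 1)) ≤ extCuts k y i := by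
  rw [base_formula k l h (altPiece_subset hy _)] at h1
  have htot := vol_total hy b
  have hu : (0 : ℝ) < 1 / (k + 1) := by positivity
  have hku := unit_mul k
  have hext : ∀ i, i ≤ k + 1 → extCuts k (zb k) i = (i : ℝ) * (1 / (k + 1)) := fun i hi => ext_zb k hi
  set u : ℝ := 1 / (k + 1) with hudef
  set m := volume.real (Hs k) with hm
  set B := volume.real (altPiece k y (!b)) with hB
  set BH := volume.real (altPiece k y (!b) ∩ Hs k) with hBH
  have hh : 0 < h := by linarith
  set c := (h - l) * u / (2 * h) with hc
  have hhc : h * c = (h - l) * u / 2 := by rw [hc]; field_simp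
  have hcpos : 0 < c := by
    rw [hc]
    have : 0 < h - l := by linarith
    positivity
  have hBle : B ≤ m - u / 4 + c := by linarith
  set Q : ℕ → Set ℝ := fun i => Set.Ioo (if i = 1 then 5 / 4 * u else i * u) ((i + 1) * u) with hQ
  have hQlow : ∀ i x, x ∈ Q i → (i : ℝ) * u < x := by
    intro i x hx
    have := hx.1
    split_ifs at this with h
    · subst h
      push_cast
      linarith
    · exact this
  have hQ01 : ∀ i ≤ k, Q i ⊆ Set.Icc 0 1 := by
    intro i hi x hx
    have h3 := hQlow i x hx
    have h4 : x < (i + 1) * u := hx.2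
    have h5 : (i : ℝ) ≤ k := by exact_mod_cast hi
    constructor
    · have : (0 : ℝ) ≤ i * u := by positivity
      linarith
    · nlinarith
  have key : ∀ i, i ≤ k → ∃ z, z ∈ Q i ∧ z ∈ altPiece k y (if i % 2 = 0 then b else !b) := by
    intro i hi
    by_contra hcon
    push Not at hcon
    by_cases hpar : i % 2 = 0
    · simp only [hpar, if_true] at hcon
      have hempty : altPiece k y b ∩ Q i = ∅ := by
        ext x
        simp only [Set.mem_inter_iff, Set.mem_empty_iff_false, iff_false]
        exact fun hx => hcon x hx.2 hx.1
      have h3 := vol_split hy b (hQ01 i hi)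
      rw [hempty] at h3
      have hi1 : i ≠ 1 := by rintro rfl; omega
      have h4 : volume.real (Q i) = u := by
        simp only [hQ, if_neg hi1]
        rw [vol_Ioo (by nlinarith)]
        ring
      rw [h4] at h3
      simp only [measureReal_empty, zero_add] at h3
      have hdis : Disjoint (altPiece k y (!b) ∩ Hs k) (altPiece k y (!b) ∩ Q i) := by
        rw [Set.disjoint_left]
        rintro x ⟨_, hxH⟩ ⟨_, hxQ⟩
        obtain ⟨j, hj, hjb, hj1, hj2⟩ := mem_altPiece.1 hxH
        rw [hext j (by omega)] at hj1
        rw [hext (j + 1) (by omega)] at hj2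
        push_cast at hj2
        have q1 := hQlow i x hxQ
        have q2 : x < (i + 1) * u := hxQ.2
        have r1 : (j : ℝ) < i + 1 := by
          by_contra hcc
          push Not at hcc
          nlinarith
        have r2 : (i : ℝ) < j + 1 := by
          by_contra hcc
          push Not at hcc
          nlinarith
        have r3 : j < i + 1 := by exact_mod_cast r1
        have r4 : i < j + 1 := by exact_mod_cast r2
        have : i = j := by omega
        subst this
        simp [hpar] at hjb
      have h5 : BH + u ≤ B := by
        rw [← h3, hBH, hB, ← measureReal_union hdis
          ((altPiece_measurable _ _).inter measurableSet_Ioo)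
          (h₁ := fin_of_subset (Set.inter_subset_left.trans (altPiece_subset hy _)))
          (h₂ := fin_of_subset (Set.inter_subset_left.trans (altPiece_subset hy _)))]
        apply measureReal_mono
        · exact Set.union_subset Set.inter_subset_left Set.inter_subset_left
        · exact fin_of_subset (altPiece_subset hy _)
      nlinarith
    · simp only [hpar, if_false] at hcon
      have hQH : Q i ⊆ Hs k := by
        intro x hx
        apply mem_altPiece.2
        refine ⟨i, hi, by simp [hpar], ?_, ?_⟩
        · rw [hext i (by omega)]
          exact (hQlow i x hx).le
        · rw [hext (i + 1) (by omega)]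
          push_cast
          exact hx.2.le
      have hdis : Disjoint (altPiece k y (!b) ∩ Hs k) (Q i) := by
        rw [Set.disjoint_left]
        rintro x ⟨hx, _⟩ hxQ
        exact hcon x hxQ hx
      have h4 : 3 / 4 * u ≤ volume.real (Q i) := by
        simp only [hQ]
        split_ifs with hi1
        · subst hi1
          rw [vol_Ioo (by push_cast; nlinarith)]
          push_cast
          linarith
        · rw [vol_Ioo (by nlinarith)]
          linarith
      have h5 : BH + volume.real (Q i) ≤ m := by
        rw [hBH, hm, ← measureReal_union hdis measurableSet_Ioo
          (h₁ := fin_of_subset (Set.inter_subset_left.trans (altPiece_subset hy _)))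
          (h₂ := fin_of_subset (hQ01 i hi))]
        apply measureReal_mono
        · exact Set.union_subset Set.inter_subset_right hQH
        · exact fin_of_subset (Hs_sub k)
      have h6 : l * B ≤ l * (m - u / 4 + c) := by gcongr
      have h7 : (h - l) * BH ≤ (h - l) * (m - 3 / 4 * u) := by
        have : 0 ≤ h - l := by linarith
        gcongr
        linarith
      have h8 : l * c < h * c := by nlinarith
      nlinarith
  choose! z hzQ hzP using key
  have key2 : ∀ i, i ≤ k → ∃ p, p ≤ k ∧ decide (p % 2 = 0) = (if i % 2 = 0 then b else !b) ∧
      extCuts k y p ≤ z i ∧ z i ≤ extCuts k y (p + 1) := fun i hi => mem_altPiece.1 (hzP i hi)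
  choose! p hp1 hp2 hp3 hp4 using key2
  have hp := strict_index p hp1 (by
    intro i hi
    have hz : z i < z (i + 1) := by
      have q1 : z i < (i + 1) * u := (hzQ i hi.le).2
      have q2 := hQlow (i + 1) _ (hzQ (i + 1) hi)
      push_cast at q2
      linarith
    by_contra hcon
    push Not at hcon
    rcases hcon.lt_or_eq with hlt | heq
    · have := extCuts_mono hy (Nat.succ_le_of_lt hlt)
      have := hp4 (i + 1) hi
      have := hp3 i hi.le
      simp only [Nat.succ_eq_add_one] at *
      linarith
    · have a1 := hp2 i hi.le
      have a2 := hp2 (i + 1) hi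
      rw [heq, a1] at a2
      rcases Nat.even_or_odd' i with ⟨r, hr | hr⟩
      · rw [if_pos (by omega), if_neg (by omega)] at a2
        cases b <;> simp at a2
      · rw [if_neg (by omega), if_pos (by omega)] at a2
        cases b <;> simp at a2)
  constructor
  · have := hp2 0 (Nat.zero_le _)
    rw [hp 0 (Nat.zero_le _)] at this
    simpa using this.symm
  · intro i hi
    have a1 := hp4 1 (by omega)
    rw [hp 1 (by omega)] at a1
    have a2 := (hzQ 1 (by omega)).1
    rw [if_pos rfl] at a2
    have := extCuts_mono hy hi
    linarith

/-! ### Perturbed worlds -/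

/-- The perturbed density of Bob at location `(a, a + 2w)`. -/
def gW (k : ℕ) (l h η a w : ℝ) : ℝ → ℝ :=
  gfun l h η (Hs k) (Set.Ioo (a + w) (a + 2 * w)) (Set.Ioo a (a + w))

lemma gW_formula (k : ℕ) (l h η a w : ℝ) {S : Set ℝ} (hS : S ⊆ Set.Icc 0 1) :
    pieceVal (gW k l h η a w) S = pieceVal (gfun l h 0 (Hs k) ∅ ∅) S +
      η * (volume.real (S ∩ Set.Ioo (a + w) (a + 2 * w)) - volume.real (S ∩ Set.Ioo a (a + w))) := by
  unfold gW
  rw [pieceVal_gfun l h η (Hs_meas k) measurableSet_Ioo measurableSet_Ioo (fin_of_subset hS),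
    base_formula k l h hS]

lemma gW_zero (k : ℕ) (l h a w : ℝ) : gW k l h 0 a w = gfun l h 0 (Hs k) ∅ ∅ := by
  unfold gW gfun
  simp

lemma vol_inter_Ioo_le (S : Set ℝ) {a b : ℝ} (h : a ≤ b) :
    volume.real (S ∩ Set.Ioo a b) ≤ b - a := by
  rw [← vol_Ioo h]
  exact measureReal_mono Set.inter_subset_right (by simp)

lemma round_any (k : ℕ) (l h η a w : ℝ) (hη : 0 ≤ η) (hw : 0 ≤ w) {S : Set ℝ}
    (hS : S ⊆ Set.Icc 0 1) (h1 : 1 / 2 ≤ pieceVal (gfun l h 0 (Hs k) ∅ ∅) S) :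
    1 / 2 - η * w ≤ pieceVal (gW k l h η a w) S := by
  rw [gW_formula k l h η a w hS]
  have h2 := vol_inter_Ioo_le S (a := a) (b := a + w) (by linarith)
  have h3 : 0 ≤ volume.real (S ∩ Set.Ioo (a + w) (a + 2 * w)) := measureReal_nonneg
  have h4 : η * (-w) ≤ η * (volume.real (S ∩ Set.Ioo (a + w) (a + 2 * w)) -
      volume.real (S ∩ Set.Ioo a (a + w))) := by
    gcongr
    linarith
  linarith

lemma round_good {k : ℕ} (hk : 2 ≤ k) {l h : ℝ} (hl : 0 < l) (hlh : l < h)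
    (e1 : h * (volume.real (Hs k) - (1 / (k + 1)) / 4) = 1 / 2)
    {η a w : ℝ} (hη : 0 ≤ η) (hw : 0 ≤ w) (haw : a + 2 * w ≤ 5 / 4 * (1 / (k + 1)))
    {y : Fin k → ℝ} (hy : ValidCuts k y) (b : Bool)
    (h1 : 1 / 2 ≤ pieceVal (gfun l h 0 (Hs k) ∅ ∅) (altPiece k y (!b)))
    (h2 : 1 - volume.real (Hs k) + (1 / (k + 1)) / 4 - (h - l) * (1 / (k + 1)) / (2 * h) ≤
      volume.real (altPiece k y b)) :
    1 / 2 ≤ pieceVal (gW k l h η a w) (altPiece k y (!b)) := by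
  obtain ⟨rfl, hst⟩ := struct hk hl hlh e1 hy b h1 h2
  rw [gW_formula k l h η a w (altPiece_subset hy _)]
  have hmem : ∀ x : ℝ, x < 5 / 4 * (1 / (k + 1)) → (x ∈ altPiece k y (!true) ↔ extCuts k y 1 ≤ x) := by
    intro x hx
    rw [mem_altPiece]
    constructor
    · rintro ⟨i, hi, hib, hi1, hi2⟩
      rcases lt_or_ge i 2 with h | h
      · interval_cases i
        · simp at hib
        · exact hi1
      · have := hst i h
        linarith
    · intro h
      exact ⟨1, by omega, by simp, h, hx.le.trans (hst 2 le_rfl)⟩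
  have : volume.real (altPiece k y (!true) ∩ Set.Ioo a (a + w)) ≤
      volume.real (altPiece k y (!true) ∩ Set.Ioo (a + w) (a + 2 * w)) := by
    rcases le_or_gt (extCuts k y 1) (a + w) with h | h
    · have h3 := vol_inter_Ioo_le (altPiece k y (!true)) (a := a) (b := a + w) (by linarith)
      have h4 : altPiece k y (!true) ∩ Set.Ioo (a + w) (a + 2 * w) =
          Set.Ioo (a + w) (a + 2 * w) := by
        rw [Set.inter_eq_right]
        intro x hx
        rw [hmem x (hx.2.trans_le haw)]
        exact h.trans hx.1.le
      rw [h4, vol_Ioo (by linarith)]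
      linarith
    · have h4 : altPiece k y (!true) ∩ Set.Ioo a (a + w) = ∅ := by
        ext x
        simp only [Set.mem_inter_iff, Set.mem_empty_iff_false, iff_false]
        rintro ⟨h5, h6⟩
        rw [hmem x (by linarith [h6.2])] at h5
        linarith [h6.2]
      rw [h4, measureReal_empty]
      exact measureReal_nonneg
  have := mul_nonneg hη (sub_nonneg.2 this)
  linarith

lemma round_untouched {k : ℕ} {l h : ℝ} {η a w : ℝ} (hw : 0 ≤ w) (ha : 0 ≤ a)
    (haw : a + 2 * w ≤ 1) {y : Fin k → ℝ} (hy : ValidCuts k y) (b : Bool)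
    (hu : ∀ i, y i ∉ Set.Ioo a (a + 2 * w))
    (h1 : 1 / 2 ≤ pieceVal (gfun l h 0 (Hs k) ∅ ∅) (altPiece k y (!b))) :
    1 / 2 ≤ pieceVal (gW k l h η a w) (altPiece k y (!b)) := by
  rw [gW_formula k l h η a w (altPiece_subset hy _)]
  have hex : ∀ i, extCuts k y i ≤ a ∨ a + 2 * w ≤ extCuts k y i := by
    intro i
    unfold extCuts
    split_ifs with h1 h2
    · exact Or.inl ha
    · have := hu ⟨i - 1, h2⟩
      by_contra hcon
      push Not at hcon
      exact this hcon
    · exact Or.inr haw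
  have : volume.real (altPiece k y (!b) ∩ Set.Ioo (a + w) (a + 2 * w)) =
      volume.real (altPiece k y (!b) ∩ Set.Ioo a (a + w)) := by
    by_cases hne : ∃ x ∈ altPiece k y (!b), x ∈ Set.Ioo a (a + 2 * w)
    · obtain ⟨x, hx, hxI⟩ := hne
      obtain ⟨i, hi, hib, hi1, hi2⟩ := mem_altPiece.1 hx
      have q1 : extCuts k y i ≤ a := by
        rcases hex i with h | h
        · exact h
        · linarith [hxI.2]
      have q2 : a + 2 * w ≤ extCuts k y (i + 1) := by
        rcases hex (i + 1) with h | h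
        · linarith [hxI.1]
        · exact h
      have hsub : ∀ z, a ≤ z → z ≤ a + 2 * w → z ∈ altPiece k y (!b) := fun z z1 z2 =>
        mem_altPiece.2 ⟨i, hi, hib, q1.trans z1, z2.trans q2⟩
      rw [Set.inter_eq_right.2, Set.inter_eq_right.2, vol_Ioo (by linarith), vol_Ioo (by linarith)]
      · ring
      · exact fun z hz => hsub z hz.1.le (by linarith [hz.2])
      · exact fun z hz => hsub z (by linarith [hz.1]) hz.2.le
    · push Not at hne
      have r1 : altPiece k y (!b) ∩ Set.Ioo (a + w) (a + 2 * w) = ∅ := by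
        ext z
        simp only [Set.mem_inter_iff, Set.mem_empty_iff_false, iff_false]
        rintro ⟨h5, h6⟩
        exact hne z h5 ⟨by linarith [h6.1], h6.2⟩
      have r2 : altPiece k y (!b) ∩ Set.Ioo a (a + w) = ∅ := by
        ext z
        simp only [Set.mem_inter_iff, Set.mem_empty_iff_false, iff_false]
        rintro ⟨h5, h6⟩
        exact hne z h5 ⟨h6.1, by linarith [h6.2]⟩
      rw [r1, r2]
  rw [this]
  simpa using h1

lemma gW_total {k : ℕ} {l h : ℝ}
    (e2 : l * (1 - volume.real (Hs k)) + h * volume.real (Hs k) = 1)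
    {η a w : ℝ} (hw : 0 ≤ w) (ha : 0 ≤ a) (haw : a + 2 * w ≤ 1) :
    pieceVal (gW k l h η a w) (Set.Icc 0 1) = 1 := by
  rw [gW_formula k l h η a w le_rfl, base_formula k l h le_rfl, Set.inter_eq_right.2 (Hs_sub k),
    Set.inter_eq_right.2, Set.inter_eq_right.2, vol_Ioo (by linarith), vol_Ioo (by linarith)]
  · have : volume.real (Set.Icc (0 : ℝ) 1) = 1 := by simp
    rw [this]
    linarith
  · exact fun z hz => ⟨by linarith [hz.1], by linarith [hz.2]⟩
  · exact fun z hz => ⟨by linarith [hz.1], by linarith [hz.2]⟩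

lemma gW_split {k : ℕ} {l h : ℝ}
    (e2 : l * (1 - volume.real (Hs k)) + h * volume.real (Hs k) = 1)
    {η a w : ℝ} (hw : 0 ≤ w) (ha : 0 ≤ a) (haw : a + 2 * w ≤ 1)
    {y : Fin k → ℝ} (hy : ValidCuts k y) (b : Bool) :
    pieceVal (gW k l h η a w) (altPiece k y b) + pieceVal (gW k l h η a w) (altPiece k y (!b)) = 1 := by
  rw [gW_formula k l h η a w (altPiece_subset hy _), gW_formula k l h η a w (altPiece_subset hy _),
    base_formula k l h (altPiece_subset hy _), base_formula k l h (altPiece_subset hy _)]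
  have s1 := vol_total hy b
  have s2 := vol_split hy b (Hs_sub k)
  have s3 := vol_split hy b (X := Set.Ioo (a + w) (a + 2 * w))
    (fun z hz => ⟨by linarith [hz.1], by linarith [hz.2]⟩)
  have s4 := vol_split hy b (X := Set.Ioo a (a + w))
    (fun z hz => ⟨by linarith [hz.1], by linarith [hz.2]⟩)
  rw [vol_Ioo (by linarith)] at s3 s4
  have e3 : volume.real (altPiece k y b) = 1 - volume.real (altPiece k y (!b)) := by linarith
  have e4 : volume.real (altPiece k y b ∩ Hs k) =
    volume.real (Hs k) - volume.real (altPiece k y (!b) ∩ Hs k) := by linarith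
  have e5 := eq_sub_of_add_eq s3
  have e6 := eq_sub_of_add_eq s4
  rw [e3, e4, e5, e6]
  linarith

lemma gW_bounds {k : ℕ} {l h : ℝ} (hl : 0 < l) (hlh : l < h) (hk : 2 ≤ k)
    {η a w : ℝ} (hη : 0 ≤ η) (hη2 : η ≤ h / 2) (hw : 0 ≤ w) (ha : 1 / (k + 1) ≤ a)
    (haw : a + 2 * w ≤ 5 / 4 * (1 / (k + 1))) (x : ℝ) :
    min l (h / 2) ≤ gW k l h η a w x ∧ gW k l h η a w x ≤ 3 / 2 * h := by
  have hu : (0 : ℝ) < 1 / (k + 1) := by positivity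
  have hW : ∀ x, a < x → x < a + 2 * w → x ∈ Hs k := by
    intro x h1 h2
    refine mem_altPiece.2 ⟨1, by omega, by simp, ?_, ?_⟩
    · rw [ext_zb k (by omega)]
      push_cast
      linarith
    · rw [ext_zb k (by omega)]
      push_cast
      linarith
  have m1 := min_le_left l (h / 2)
  have m2 := min_le_right l (h / 2)
  unfold gW gfun
  by_cases hp : x ∈ Set.Ioo (a + w) (a + 2 * w)
  · have hm : x ∉ Set.Ioo a (a + w) := fun hm => by linarith [hm.2, hp.1]
    have hH := hW x (by linarith [hp.1]) hp.2
    rw [Set.indicator_of_mem hp, Set.indicator_of_notMem hm, Set.indicator_of_mem hH]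
    constructor <;> linarith
  · by_cases hm : x ∈ Set.Ioo a (a + w)
    · have hH := hW x hm.1 (by linarith [hm.2])
      rw [Set.indicator_of_notMem hp, Set.indicator_of_mem hm, Set.indicator_of_mem hH]
      constructor <;> linarith
    · rw [Set.indicator_of_notMem hp, Set.indicator_of_notMem hm]
      by_cases hH : x ∈ Hs k
      · rw [Set.indicator_of_mem hH]
        constructor <;> linarith
      · rw [Set.indicator_of_notMem hH]
        constructor <;> linarith

lemma exhibit {k : ℕ} (hk : 2 ≤ k) {l h : ℝ}
    (e1 : h * (volume.real (Hs k) - (1 / (k + 1)) / 4) = 1 / 2)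
    {η a w ε : ℝ} (hε : 0 ≤ ε) (hεw : ε ≤ w) (hηε : h * ε = η * w)
    (ha : 1 / (k + 1) ≤ a) (haw : a + 2 * w ≤ 5 / 4 * (1 / (k + 1))) :
    ∃ y, ValidCuts k y ∧ 1 / 2 ≤ pieceVal (gW k l h η a w) (altPiece k y false) ∧
      volume.real (altPiece k y true) = 1 - volume.real (Hs k) + (1 / (k + 1)) / 4 + ε := by
  have hu : (0 : ℝ) < 1 / (k + 1) := by positivity
  have hku := unit_mul k
  have hext : ∀ i, i ≤ k + 1 → extCuts k (zb k) i = (i : ℝ) * (1 / (k + 1)) := fun i hi => ext_zb k hi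
  set u : ℝ := 1 / (k + 1) with hudef
  set Y : ℕ → ℝ := fun i => if i = 0 then a + w else if i = 1 then a + w + 3 / 4 * u - ε
    else (i + 1) * u with hY
  have Y0 : Y 0 = a + w := by simp [hY]
  have Y1 : Y 1 = a + w + 3 / 4 * u - ε := by simp [hY]
  have Y2 : ∀ i, 2 ≤ i → Y i = (i + 1) * u := by
    intro i hi
    simp only [hY]
    rw [if_neg (by omega), if_neg (by omega)]
  have Ymono : Monotone Y := by
    apply monotone_nat_of_le_succ
    intro i
    rcases Nat.lt_or_ge i 2 with hi | hi
    · interval_cases i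
      · rw [Y0, Y1]; linarith
      · rw [Y1, Y2 2 le_rfl]; push_cast; linarith
    · rw [Y2 i hi, Y2 (i + 1) (by omega)]
      push_cast
      linarith
  have hy : ValidCuts k (fun i : Fin k => Y i) := by
    constructor
    · exact fun i j hij => Ymono hij
    · intro i
      constructor
      · have := Ymono (Nat.zero_le i)
        rw [Y0] at this
        linarith
      · have h3 := Ymono (show (i : ℕ) ≤ k by omega)
        rw [Y2 k hk] at h3
        linarith
  have E1 : extCuts k (fun i : Fin k => Y i) 1 = a + w := by
    rw [extCuts_succ _ (by omega : 0 < k)]; exact Y0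
  have E2 : extCuts k (fun i : Fin k => Y i) 2 = a + w + 3 / 4 * u - ε := by
    rw [extCuts_succ _ (by omega : 1 < k)]; exact Y1
  have E3 : ∀ i, 3 ≤ i → i ≤ k + 1 → extCuts k (fun i : Fin k => Y i) i = i * u := by
    intro i hi hik
    obtain ⟨j, rfl⟩ : ∃ j, i = j + 1 := ⟨i - 1, by omega⟩
    by_cases hj : j < k
    · rw [extCuts_succ _ hj]
      rw [show Y ((⟨j, hj⟩ : Fin k) : ℕ) = Y j from rfl, Y2 j (by omega)]
      push_cast
      ring
    · have : j = k := by omega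
      subst this
      rw [extCuts_last]
      push_cast
      exact hku.symm
  refine ⟨fun i => Y i, hy, ?_⟩
  have hvol : volume.real (altPiece k (fun i : Fin k => Y i) false) =
      volume.real (Hs k) - u / 4 - ε := by
    have : volume.real (altPiece k (fun i : Fin k => Y i) false) - volume.real (Hs k) = - u / 4 - ε := by
      unfold Hs
      rw [vol_sum hy, vol_sum (zb_valid k), ← Finset.sum_sub_distrib,
        Finset.sum_eq_single_of_mem 1 (by simp; omega)]
      · rw [hext 1 (by omega), hext (1 + 1) (by omega), E1, E2]
        push_cast
        simp
        ring
      · intro i hi hi1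
        have hi' : i < k + 1 := Finset.mem_range.1 hi
        by_cases hpar : i % 2 = 0
        · simp [hpar]
        · rw [E3 i (by omega) (by omega), E3 (i + 1) (by omega) (by omega), hext i (by omega),
            hext (i + 1) (by omega)]
          simp
    linarith
  have htot := vol_total hy true
  simp only [Bool.not_true] at htot
  refine ⟨?_, by linarith⟩
  rw [gW_formula k l h η a w (altPiece_subset hy _), base_formula k l h (altPiece_subset hy _)]
  have s1 : altPiece k (fun i : Fin k => Y i) false ⊆ Hs k := by
    intro x hx
    obtain ⟨i, hi, hib, hi1, hi2⟩ := mem_altPiece.1 hx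
    refine mem_altPiece.2 ⟨i, hi, hib, ?_, ?_⟩
    · rw [hext i (by omega)]
      rcases Nat.lt_or_ge i 3 with h3 | h3
      · interval_cases i
        · simp at hib
        · rw [E1] at hi1; push_cast; linarith
        · simp at hib
      · rwa [E3 i h3 (by omega)] at hi1
    · rw [hext (i + 1) (by omega)]
      rcases Nat.lt_or_ge i 3 with h3 | h3
      · interval_cases i
        · simp at hib
        · rw [E2] at hi2; push_cast; linarith
        · simp at hib
      · rwa [E3 (i + 1) (by omega) (by omega)] at hi2
  have s2 : Set.Ioo (a + w) (a + 2 * w) ⊆ altPiece k (fun i : Fin k => Y i) false := by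
    intro x hx
    refine mem_altPiece.2 ⟨1, by omega, by simp, ?_, ?_⟩
    · rw [E1]; exact hx.1.le
    · rw [E2]; linarith [hx.2]
  have s3 : altPiece k (fun i : Fin k => Y i) false ∩ Set.Ioo a (a + w) = ∅ := by
    ext x
    simp only [Set.mem_inter_iff, Set.mem_empty_iff_false, iff_false]
    rintro ⟨hx, hx2⟩
    obtain ⟨i, hi, hib, hi1, hi2⟩ := mem_altPiece.1 hx
    have : 1 ≤ i := by
      by_contra hcon
      have : i = 0 := by omega
      subst this
      simp at hib
    have := extCuts_mono hy this
    rw [E1] at this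
    linarith [hx2.2]
  rw [Set.inter_eq_left.2 s1, Set.inter_eq_right.2 s2, s3, measureReal_empty, vol_Ioo (by linarith), hvol]
  nlinarith

set_option maxHeartbeats 4000000

/-- `k ≥ 2` cuts, non-myopic Bob with public learning rate, lower bound:
for `k ≥ 2` and `α ∈ (-1/2, 1)` there exist `c₀, c₁ > 0`, a horizon threshold `T₀`, and
density bounds `0 < δ' ≤ Δ'` such that for every Alice value density, every valid
deterministic Alice strategy `S_A`, and every `T ≥ T₀`, there are a Bob value density and a
deterministic Bob strategy whose regret over horizon `T` is at most `c₀·T^α` while Alice's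
Stackelberg regret over horizon `T` is at least `c₁·T^{(2+α)/3}/k`. -/
theorem k_cut_public_rate_lower (δ Δ : ℝ) (hδ : 0 < δ) (hδΔ : δ ≤ Δ)
    (k : ℕ) (hk : 2 ≤ k) (α : ℝ) (hα₁ : -(1/2 : ℝ) < α) (hα₂ : α < 1) :
    ∃ (c₀ c₁ : ℝ) (T₀ : ℕ) (δ' Δ' : ℝ), 0 < c₀ ∧ 0 < c₁ ∧ 0 < δ' ∧ δ' ≤ Δ' ∧
      ∀ vA : ℝ → ℝ, IsValueDensity δ Δ vA →
        ∀ SA : AliceStrategy k, AliceValid k SA →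
          ∀ T : ℕ, T₀ ≤ T →
            ∃ (vB : ℝ → ℝ) (SB : BobStrategy k),
              IsValueDensity δ' Δ' vB ∧
              bobRegret k vB SA SB T ≤ c₀ * (T : ℝ) ^ α ∧
              c₁ * (T : ℝ) ^ ((2 + α) / 3) / k ≤ aliceRegret k vA vB SA SB T := by
  obtain ⟨l, h, hl, hlh, e1, e2⟩ := exists_params k hk
  have hh : 0 < h := by linarith
  have hu : (0 : ℝ) < 1 / (k + 1) := by positivity
  have hu1 : 5 / 4 * (1 / (k + 1) : ℝ) ≤ 1 := by
    have := unit_mul k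
    have h3 : (2 : ℝ) ≤ k := by exact_mod_cast hk
    nlinarith
  have hcpos : 0 < (h - l) * (1 / (k + 1)) / (2 * h) := by
    have : 0 < h - l := by linarith
    positivity
  obtain ⟨c, hc⟩ : ∃ c, c = (h - l) * (1 / (k + 1)) / (2 * h) := ⟨_, rfl⟩
  obtain ⟨u, hudef⟩ : ∃ u : ℝ, u = 1 / (k + 1) := ⟨_, rfl⟩
  obtain ⟨U0, hU0⟩ : ∃ U0, U0 = 1 - volume.real (Hs k) + (1 / (k + 1)) / 4 := ⟨_, rfl⟩
  rw [← hc] at hcpos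
  rw [← hudef] at hu hu1
  have hkpos : (0 : ℝ) < k := by
    have : 0 < k := by omega
    exact_mod_cast this
  have hk1 : (1 : ℝ) ≤ k := by
    have : 1 ≤ k := by omega
    exact_mod_cast this
  have hmin : 0 < min l (h / 2) := lt_min hl (by linarith)
  have hΔ : 0 < Δ := by linarith
  refine ⟨k * h * u ^ 2 / (128 * c), u / 32, 1, δ * min l (h / 2), Δ * (3 / 2 * h), by positivity,
    by positivity, by positivity, ?_, ?_⟩
  · have : min l (h / 2) ≤ 3 / 2 * h := (min_le_right _ _).trans (by linarith)
    exact mul_le_mul hδΔ this hmin.le hΔ.le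
  intro vA hA SA hSA T hT
  obtain ⟨F, Fmeas, F01, Fval, Fsurj, Ftot, Fpiece, Fvol⟩ := cov δ Δ hδ vA hA k
  -- the densities
  obtain ⟨G, hG⟩ : ∃ G : ℝ → ℝ → ℝ → ℝ → ℝ,
    G = fun η a w x => vA x * gW k l h η a w (F x) := ⟨_, rfl⟩
  have gmeas : ∀ η a w, Measurable (gW k l h η a w) := fun η a w =>
    gfun_measurable l h η (Hs_meas k) measurableSet_Ioo measurableSet_Ioo
  have Gpiece : ∀ η a w, ∀ x, ValidCuts k x → ∀ b, pieceVal (G η a w) (altPiece k x b) =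
      pieceVal (gW k l h η a w) (altPiece k (fun i => F (x i)) b) := by
    intro η a w x hx b
    rw [hG]
    exact Fpiece _ (gmeas η a w) x hx b
  have Gdens : ∀ η a w, 0 ≤ η → η ≤ h / 2 → 0 ≤ w → u ≤ a → a + 2 * w ≤ 5 / 4 * u →
      IsValueDensity (δ * min l (h / 2)) (Δ * (3 / 2 * h)) (G η a w) := by
    intro η a w h1 h2 h3 h4 h5
    rw [hudef] at h4 h5
    refine ⟨?_, ?_, ?_⟩
    · rw [hG]
      exact hA.1.mul ((gmeas η a w).comp Fmeas)
    · intro x hx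
      have b1 := hA.2.1 x hx
      have b2 := gW_bounds hl hlh hk h1 h2 h3 h4 h5 (F x)
      rw [hG]
      constructor
      · exact mul_le_mul b1.1 b2.1 hmin.le (hδ.le.trans b1.1)
      · exact mul_le_mul b1.2 b2.2 (hmin.le.trans b2.1) hΔ.le
    · have t1 := Ftot _ (gmeas η a w)
      rw [gW_total e2 h3 (by linarith [hudef]) (by linarith [hudef])] at t1
      rw [hG]
      exact t1
  have stack : ∀ η a w ε, 0 ≤ ε → ε ≤ w → h * ε = η * w → u ≤ a → a + 2 * w ≤ 5 / 4 * u →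
      U0 + ε ≤ stackelbergValue k vA (G η a w) := by
    intro η a w ε h1 h2 h3 h4 h5
    rw [hudef] at h4 h5
    obtain ⟨y, hy, hy1, hy2⟩ := exhibit hk (l := l) e1 h1 h2 h3 h4 h5
    obtain ⟨x, hx, rfl⟩ := Fsurj y hy
    unfold stackelbergValue
    apply le_csSup
    · refine ⟨1, ?_⟩
      rintro r ⟨x', b, hx', -, rfl⟩
      rw [Fvol x' hx' b]
      have := vol_total (Fval x' hx') b
      have : 0 ≤ volume.real (altPiece k (fun i => F (x' i)) (!b)) := measureReal_nonneg
      linarith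
    · refine ⟨x, true, hx, ?_, ?_⟩
      · rw [Gpiece _ _ _ x hx]
        exact hy1
      · rw [Fvol x hx, hy2, hU0]
  -- the play
  obtain ⟨SB, hSB⟩ : ∃ SB : BobStrategy k, SB = fun _ _ x =>
    decide (1 / 2 ≤ pieceVal (G 0 u 0) (altPiece k x true)) := ⟨_, rfl⟩
  obtain ⟨P, hP⟩ : ∃ P : ℕ → Fin k → ℝ, P = fun t => roundCuts k SA SB T t := ⟨_, rfl⟩
  obtain ⟨ch, hch⟩ : ∃ ch : ℕ → Bool, ch = fun t => roundChoice k SA SB T t := ⟨_, rfl⟩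
  have Pval : ∀ t, ValidCuts k (P t) := by
    intro t
    rw [hP]
    exact hSA _ _
  obtain ⟨y, hydef⟩ : ∃ y : ℕ → Fin k → ℝ, y = fun t i => F (P t i) := ⟨_, rfl⟩
  have yval : ∀ t, ValidCuts k (y t) := by
    intro t
    rw [hydef]
    exact Fval _ (Pval t)
  have Gy : ∀ η a w t b, pieceVal (G η a w) (altPiece k (P t) b) =
      pieceVal (gW k l h η a w) (altPiece k (y t) b) := by
    intro η a w t b
    rw [Gpiece _ _ _ _ (Pval t), hydef]
  have hbase : ∀ t, 1 / 2 ≤ pieceVal (gfun l h 0 (Hs k) ∅ ∅) (altPiece k (y t) (!(!(ch t)))) := by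
    intro t
    rw [Bool.not_not, ← gW_zero k l h u 0]
    have hcht : ch t = decide (1 / 2 ≤ pieceVal (G 0 u 0) (altPiece k (P t) true)) := by
      rw [hch, hP]
      simp only [roundChoice, hSB]
    have hs := gW_split e2 (η := 0) (a := u) (w := 0) le_rfl hu.le (by linarith) (yval t) true
    rw [Gy] at hcht
    by_cases hcase : 1 / 2 ≤ pieceVal (gW k l h 0 u 0) (altPiece k (y t) true)
    · rw [decide_eq_true hcase] at hcht
      rw [hcht]
      exact hcase
    · rw [decide_eq_false hcase] at hcht
      rw [hcht]
      simp only [Bool.not_true] at hs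
      linarith [not_le.1 hcase]
  obtain ⟨val, hval⟩ : ∃ val : ℕ → ℝ, val = fun t => volume.real (altPiece k (y t) (!(ch t))) :=
    ⟨_, rfl⟩
  have valle : ∀ t, val t ≤ U0 := by
    intro t
    rw [hval, hU0]
    exact base_upper hl hlh e1 (yval t) (!(ch t)) (hbase t)
  have alice : ∀ vB, aliceRegret k vA vB SA SB T =
      ∑ t ∈ Finset.range T, (stackelbergValue k vA vB - val t) := by
    intro vB
    unfold aliceRegret
    apply Finset.sum_congr rfl
    intro t _
    have := Fvol (P t) (Pval t) (!(ch t))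
    rw [hval, hydef]
    simp only
    rw [← this, hP, hch]
  have bobterm : ∀ η a w ρ t, 0 ≤ ρ → 0 ≤ w → u ≤ a → a + 2 * w ≤ 5 / 4 * u →
      1 / 2 - ρ ≤ pieceVal (gW k l h η a w) (altPiece k (y t) (!(!(ch t)))) →
      max (pieceVal (G η a w) (altPiece k (roundCuts k SA SB T t) true))
        (pieceVal (G η a w) (altPiece k (roundCuts k SA SB T t) false)) -
        pieceVal (G η a w) (altPiece k (roundCuts k SA SB T t) (roundChoice k SA SB T t)) ≤ 2 * ρ := by
    intro η a w ρ t hρ hw ha haw hge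
    rw [Bool.not_not] at hge
    have r1 : roundCuts k SA SB T t = P t := by rw [hP]
    have r2 : roundChoice k SA SB T t = ch t := by rw [hch]
    rw [r1, r2, Gy, Gy, Gy]
    have hs := gW_split e2 (η := η) (a := a) (w := w) hw (by linarith) (by linarith) (yval t) true
    simp only [Bool.not_true] at hs
    rw [sub_le_iff_le_add]
    cases hb : ch t <;> rw [hb] at hge <;> apply max_le <;> linarith
  -- parameters
  have hT1 : (1 : ℝ) ≤ T := by exact_mod_cast hT
  have hTpos : (0 : ℝ) < T := by linarith
  obtain ⟨X, hX⟩ : ∃ X : ℝ, X = (T : ℝ) ^ ((1 - α) / 3) := ⟨_, rfl⟩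
  have hX1 : 1 ≤ X := by
    rw [hX]
    exact Real.one_le_rpow hT1 (by linarith)
  have hX3 : X ^ 3 = (T : ℝ) ^ (1 - α) := by
    rw [hX, ← Real.rpow_natCast, ← Real.rpow_mul hTpos.le]
    congr 1
    push_cast
    ring
  have hTα : (T : ℝ) ^ α * X ^ 3 = T := by
    rw [hX3, ← Real.rpow_add hTpos]
    simp
  have hTβ : (T : ℝ) ^ ((2 + α) / 3) * X = T := by
    rw [hX, ← Real.rpow_add hTpos]
    ring_nf
    simp
  obtain ⟨N, hN⟩ : ∃ N : ℕ, N = ⌈X⌉₊ := ⟨_, rfl⟩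
  have hXN : X ≤ N := by rw [hN]; exact Nat.le_ceil X
  have hNX : (N : ℝ) ≤ 2 * X := by
    have := Nat.ceil_lt_add_one (by linarith : (0 : ℝ) ≤ X)
    rw [hN]
    linarith
  have hNpos : (0 : ℝ) < N := by linarith
  have hN0 : 0 < N := by exact_mod_cast hNpos
  obtain ⟨w, hw⟩ : ∃ w : ℝ, w = u / (8 * N) := ⟨_, rfl⟩
  have hwpos : 0 < w := by rw [hw]; positivity
  have hwN : 8 * N * w = u := by rw [hw]; field_simp
  have hTβpos : 0 < (T : ℝ) ^ ((2 + α) / 3) := by positivity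
  have hgoal : u / 32 * (T : ℝ) ^ ((2 + α) / 3) / k ≤ w / 2 * T := by
    have s1 : u / 32 * (T : ℝ) ^ ((2 + α) / 3) / k ≤ u / 32 * (T : ℝ) ^ ((2 + α) / 3) :=
      div_le_self (by positivity) hk1
    have s2 : u / 32 * (T : ℝ) ^ ((2 + α) / 3) ≤ w / 2 * T := by
      have e : w / 2 * T = w / 2 * ((T : ℝ) ^ ((2 + α) / 3) * X) := by rw [hTβ]
      rw [← hwN, e]
      have : N * (w * (T : ℝ) ^ ((2 + α) / 3)) ≤ 2 * X * (w * (T : ℝ) ^ ((2 + α) / 3)) := by gcongr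
      nlinarith
    exact s1.trans s2
  obtain ⟨bad, hbad⟩ : ∃ bad : Finset ℕ, bad = (Finset.range T).filter (fun t => val t < U0 - c) :=
    ⟨_, rfl⟩
  have hbadsub : bad ⊆ Finset.range T := by rw [hbad]; exact Finset.filter_subset _ _
  by_cases hcase : w / 2 * T ≤ c * bad.card
  · -- many bad rounds: the unperturbed world
    refine ⟨G 0 u 0, SB, Gdens 0 u 0 le_rfl (by linarith) le_rfl le_rfl (by linarith), ?_, ?_⟩
    · have : bobRegret k (G 0 u 0) SA SB T ≤ 0 := by
        unfold bobRegret
        apply Finset.sum_nonpos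
        intro t _
        have := bobterm 0 u 0 0 t le_rfl le_rfl le_rfl (by linarith)
          (by rw [gW_zero, sub_zero]; exact hbase t)
        simpa using this
      refine this.trans ?_
      positivity
    · rw [alice]
      refine hgoal.trans (hcase.trans ?_)
      have hst := stack 0 u 0 0 le_rfl le_rfl (by simp) le_rfl (by linarith)
      have s1 : c * bad.card = ∑ t ∈ bad, c := by
        rw [Finset.sum_const, nsmul_eq_mul, mul_comm]
      rw [s1]
      refine (Finset.sum_le_sum (f := fun _ => c)
        (g := fun t => stackelbergValue k vA (G 0 u 0) - val t) ?_).trans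
        (Finset.sum_le_sum_of_subset_of_nonneg hbadsub ?_)
      · intro t ht
        rw [hbad, Finset.mem_filter] at ht
        have := ht.2
        linarith
      · intro t _ _
        have := valle t
        linarith
  · -- few bad rounds: hide the perturbation at a rarely touched location
    push Not at hcase
    obtain ⟨a, ha⟩ : ∃ a : ℕ → ℝ, a = fun j : ℕ => u + 2 * w * (j : ℝ) := ⟨_, rfl⟩
    have ha1 : ∀ j, u ≤ a j := by
      intro j
      rw [ha]
      have : 0 ≤ 2 * w * j := by positivity
      simp only
      linarith
    have ha2 : ∀ j ∈ Finset.range N, a j + 2 * w ≤ 5 / 4 * u := by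
      intro j hj
      have : (j : ℝ) + 1 ≤ N := by exact_mod_cast Finset.mem_range.1 hj
      rw [ha]
      simp only
      nlinarith
    obtain ⟨touched, htouched⟩ : ∃ touched : ℕ → ℕ → Prop,
      touched = fun j t => ∃ i, y t i ∈ Set.Ioo (a j) (a j + 2 * w) := ⟨_, rfl⟩
    have hone : ∀ t, ((Finset.range N).filter (fun j => touched j t)).card ≤ k := by
      intro t
      have hsub : (Finset.range N).filter (fun j => touched j t) ⊆
          (Finset.univ : Finset (Fin k)).biUnion (fun i =>
            (Finset.range N).filter (fun j => y t i ∈ Set.Ioo (a j) (a j + 2 * w))) := by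
        intro j hj
        rw [Finset.mem_filter, htouched] at hj
        obtain ⟨hj1, i, hi⟩ := hj
        rw [Finset.mem_biUnion]
        exact ⟨i, Finset.mem_univ _, Finset.mem_filter.2 ⟨hj1, hi⟩⟩
      refine (Finset.card_le_card hsub).trans ?_
      refine (Finset.card_biUnion_le_card_mul _ _ 1 ?_).trans (by simp)
      intro i _
      rw [Finset.card_le_one]
      intro j hj j' hj'
      rw [Finset.mem_filter, ha] at hj hj'
      obtain ⟨-, p1, p2⟩ := hj
      obtain ⟨-, q1, q2⟩ := hj'
      simp only at p1 p2 q1 q2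
      have r1 : (j : ℝ) < j' + 1 := by
        by_contra hcon
        push Not at hcon
        nlinarith
      have r2 : (j' : ℝ) < j + 1 := by
        by_contra hcon
        push Not at hcon
        nlinarith
      have r3 : j < j' + 1 := by exact_mod_cast r1
      have r4 : j' < j + 1 := by exact_mod_cast r2
      omega
    have hsum : ∑ j ∈ Finset.range N, (bad.filter (fun t => touched j t)).card ≤ k * bad.card := by
      simp only [Finset.card_filter]
      rw [Finset.sum_comm]
      simp only [← Finset.card_filter]
      refine (Finset.sum_le_card_nsmul bad _ k (fun t _ => hone t)).trans ?_
      rw [smul_eq_mul, mul_comm]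
    obtain ⟨j, hj, hjle⟩ : ∃ j ∈ Finset.range N,
        (bad.filter (fun t => touched j t)).card * N ≤ k * bad.card := by
      apply Finset.exists_le_of_sum_le ⟨0, Finset.mem_range.2 hN0⟩
      rw [← Finset.sum_mul, Finset.sum_const, Finset.card_range, smul_eq_mul, mul_comm]
      exact Nat.mul_le_mul_left N hsum
    refine ⟨G (h / 2) (a j) w, SB, Gdens _ _ _ (by linarith) le_rfl hwpos.le (ha1 j) (ha2 j hj), ?_, ?_⟩
    · obtain ⟨n, hn⟩ : ∃ n : ℝ, n = ((bad.filter (fun t => touched j t)).card : ℝ) := ⟨_, rfl⟩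
      have s1 : bobRegret k (G (h / 2) (a j) w) SA SB T ≤ n * (h * w) := by
        unfold bobRegret
        have : n * (h * w) = ∑ t ∈ Finset.range T, if t ∈ bad ∧ touched j t then h * w else 0 := by
          rw [← Finset.sum_filter, Finset.sum_const, nsmul_eq_mul, hn]
          congr 3
          ext t
          simp only [Finset.mem_filter]
          constructor
          · rintro ⟨p1, p2⟩
            exact ⟨hbadsub p1, p1, p2⟩
          · rintro ⟨-, p⟩
            exact p
        rw [this]
        apply Finset.sum_le_sum
        intro t ht
        split_ifs with hbt
        · have := bobterm (h / 2) (a j) w (h / 2 * w) t (by positivity) hwpos.le (ha1 j) (ha2 j hj)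
            (round_any k l h _ _ _ (by linarith) hwpos.le (altPiece_subset (yval t) _) (hbase t))
          linarith
        · have := bobterm (h / 2) (a j) w 0 t le_rfl hwpos.le (ha1 j) (ha2 j hj) ?_
          · linarith
          · rw [sub_zero]
            by_cases htb : t ∈ bad
            · apply round_untouched hwpos.le (by linarith [ha1 j]) (by linarith [ha2 j hj])
                (yval t) _ _ (hbase t)
              intro i hi
              apply hbt
              refine ⟨htb, ?_⟩
              rw [htouched]
              exact ⟨i, hi⟩
            · apply round_good hk hl hlh e1 (by linarith) hwpos.le _ (yval t) _ (hbase t)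
              · rw [hbad, Finset.mem_filter] at htb
                have h3 : U0 - c ≤ val t := by
                  by_contra hcon
                  exact htb ⟨ht, not_le.1 hcon⟩
                rw [hval, hU0, hc] at h3
                exact h3
              · rw [← hudef]
                exact ha2 j hj
      refine s1.trans ?_
      have s2 : n * N ≤ k * bad.card := by rw [hn]; exact_mod_cast hjle
      have s3 : c * (n * N) ≤ k * (w / 2 * T) := by
        calc c * (n * N) ≤ c * (k * bad.card) := by gcongr
          _ = k * (c * bad.card) := by ring
          _ ≤ k * (w / 2 * T) := by gcongr
      have s4 : (T : ℝ) ≤ (T : ℝ) ^ α * (N : ℝ) ^ 3 := by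
        calc (T : ℝ) = (T : ℝ) ^ α * X ^ 3 := hTα.symm
          _ ≤ _ := by gcongr
      have s5 : k * h * u ^ 2 / (128 * c) * (T : ℝ) ^ α =
          (k * h * (w ^ 2) * ((T : ℝ) ^ α * (N : ℝ) ^ 3)) / (2 * c * N) := by
        rw [← hwN]
        field_simp
        ring
      rw [s5, le_div_iff₀ (by positivity)]
      calc n * (h * w) * (2 * c * N) = 2 * h * w * (c * (n * N)) := by ring
        _ ≤ 2 * h * w * (k * (w / 2 * T)) := by gcongr
        _ = k * h * w ^ 2 * T := by ring
        _ ≤ _ := by gcongr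
    · rw [alice]
      refine hgoal.trans ?_
      have hst := stack (h / 2) (a j) w (w / 2) (by linarith) (by linarith) (by ring) (ha1 j) (ha2 j hj)
      have s1 : w / 2 * T = ∑ t ∈ Finset.range T, w / 2 := by
        rw [Finset.sum_const, nsmul_eq_mul, mul_comm, Finset.card_range]
      rw [s1]
      apply Finset.sum_le_sum
      intro t _
      have := valle t
      linarith

end
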